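/- arXiv:0708.3822 — 6 statements merged into one kernel-verified Lean document; each statement's English description precedes it below -/
import Mathlib

section
/- Every symplectic matrix admits a symplectic singular value decomposition: for every S ∈ Sp(2N,ℝ) there exist matrices U and V that are both symplectic and orthogonal (U, V ∈ Sp(2N,ℝ) ∩ O(2N)) and a function d : Fin N → ℝ with d(i) > 0 for all i, such that S = U · D · V, where D is the 2N×2N diagonal matrix whose first N diagonal entries are d(1), …, d(N) and whose last N diagonal entries are d(1)⁻¹, …, d(N)⁻¹. -/
open Matrix

/-- `J` denotes the 2N×2N real matrix with block form [[0, I_N], [−I_N, 0]]. -/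
noncomputable def J (N : ℕ) : Matrix (Fin N ⊕ Fin N) (Fin N ⊕ Fin N) ℝ :=
  Matrix.fromBlocks 0 1 (-1) 0

open scoped InnerProductSpace

lemma symp_basis {E : Type*} [NormedAddCommGroup E] [InnerProductSpace ℝ E]
    [FiniteDimensional ℝ E] (T K : E →ₗ[ℝ] E) (hT : T.IsSymmetric)
    (hpos : ∀ x, x ≠ 0 → 0 < ⟪T x, x⟫_ℝ)
    (hK : ∀ x y, ⟪K x, y⟫_ℝ = -⟪x, K y⟫_ℝ)
    (hTK : ∀ x, T (K (T x)) = K x) (k : ℕ) (hk : 2 * k ≤ Module.finrank ℝ E) :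
    ∃ (e : Fin k → E) (μ : Fin k → ℝ), (∀ i j, ⟪e i, e j⟫_ℝ = if i = j then 1 else 0) ∧
      (∀ i j, ⟪e i, K (e j)⟫_ℝ = 0) ∧ (∀ i, 0 < μ i) ∧ ∀ i, T (e i) = μ i • e i := by
  induction k with
  | zero => exact ⟨Fin.elim0, Fin.elim0, fun i => i.elim0, fun i => i.elim0, fun i => i.elim0,
      fun i => i.elim0⟩
  | succ k ih =>
    obtain ⟨e, μ, he, heK, hμ, hTe⟩ := ih (by omega)
    let f : E →ₗ[ℝ] (Fin k ⊕ Fin k → ℝ) :=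
      LinearMap.pi (Sum.elim (fun i => innerₛₗ ℝ (e i)) (fun i => innerₛₗ ℝ (K (e i))))
    have hf : ∀ x, x ∈ LinearMap.ker f ↔
        (∀ i, ⟪e i, x⟫_ℝ = 0) ∧ (∀ i, ⟪K (e i), x⟫_ℝ = 0) := by
      intro x
      simp [f, funext_iff]
    have hne : LinearMap.ker f ≠ ⊥ := by
      apply LinearMap.ker_ne_bot_of_finrank_lt
      simp
      omega
    have hinv : ∀ x ∈ LinearMap.ker f, T x ∈ LinearMap.ker f := by
      intro x hx
      rw [hf] at hx ⊢
      refine ⟨fun i => ?_, fun i => ?_⟩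
      · rw [← hT, hTe, inner_smul_left, hx.1 i, mul_zero]
      · have h1 := hTK (e i)
        rw [hTe, map_smul, map_smul] at h1
        have h2 := hx.2 i
        rw [← h1, inner_smul_left] at h2
        rw [← hT]
        exact (mul_eq_zero.mp h2).resolve_left (by simpa using (hμ i).ne')
    have hsym := hT.restrict_invariant hinv
    have : ∃ c, Module.End.HasEigenvalue (T.restrict hinv) c := by
      by_contra! h
      have := hsym.subsingleton_of_no_eigenvalue_finiteDimensional
        (fun c => by
          have := h c
          rwa [Module.End.HasEigenvalue, Module.End.HasUnifEigenvalue, not_not] at this)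
      exact hne (Submodule.subsingleton_iff_eq_bot.mp this)
    obtain ⟨c, hc⟩ := this
    obtain ⟨⟨v, hv⟩, hv1⟩ := hc.exists_hasEigenvector
    have hv0 : v ≠ 0 := by
      have := hv1.2
      simpa using this
    have hTv : T v = c • v := by
      have := congrArg Subtype.val hv1.apply_eq_smul
      simpa using this
    let w : E := ‖v‖⁻¹ • v
    have hw : w ∈ LinearMap.ker f := Submodule.smul_mem _ _ hv
    have hww : ⟪w, w⟫_ℝ = 1 := by
      have : ‖v‖ ≠ 0 := norm_ne_zero_iff.mpr hv0
      simp only [w, inner_smul_left, inner_smul_right, real_inner_self_eq_norm_sq]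
      simp
      field_simp
    have hTw : T w = c • w := by
      simp only [w, map_smul, hTv, smul_comm c]
    have hw0 : w ≠ 0 := by
      intro h
      simp [h] at hww
    have hcpos : 0 < c := by
      have := hpos w hw0
      rw [hTw, inner_smul_left, hww] at this
      simpa using this
    have hKs : ⟪w, K w⟫_ℝ = 0 := by
      have := hK w w
      rw [real_inner_comm] at this
      linarith
    rw [hf] at hw
    have hw1 : ∀ i, ⟪w, e i⟫_ℝ = 0 := fun i => by rw [real_inner_comm]; exact hw.1 i
    have hw2 : ∀ i, ⟪w, K (e i)⟫_ℝ = 0 := fun i => by rw [real_inner_comm]; exact hw.2 i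
    have hw3 : ∀ i, ⟪e i, K w⟫_ℝ = 0 := fun i => by
      have := hK (e i) w
      rw [hw.2 i] at this
      linarith
    refine ⟨Fin.cons w e, Fin.cons c μ, ?_, ?_, ?_, ?_⟩
    · intro i j
      refine Fin.cases ?_ (fun i => ?_) i <;> refine Fin.cases ?_ (fun j => ?_) j
      · simpa using hww
      · simpa [(Fin.succ_ne_zero j).symm] using hw1 j
      · simpa using hw.1 i
      · simpa using he i j
    · intro i j
      refine Fin.cases ?_ (fun i => ?_) i <;> refine Fin.cases ?_ (fun j => ?_) j
      · simpa using hKs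
      · simpa using hw2 j
      · simpa using hw3 i
      · simpa using heK i j
    · intro i
      refine Fin.cases ?_ (fun i => ?_) i
      · simpa using hcpos
      · simpa using hμ i
    · intro i
      refine Fin.cases ?_ (fun i => ?_) i
      · simpa using hTw
      · simpa using hTe i

lemma J_mul_J (N : ℕ) : J N * J N = -1 := by
  rw [_root_.J, fromBlocks_multiply, ← fromBlocks_one, fromBlocks_neg]
  simp

lemma J_tr (N : ℕ) : (J N)ᵀ = -J N := by
  rw [_root_.J, fromBlocks_transpose, fromBlocks_neg]
  simp

lemma J_ll (N : ℕ) (a b : Fin N) : J N (Sum.inl a) (Sum.inl b) = 0 := rfl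

lemma J_lr (N : ℕ) (a b : Fin N) : J N (Sum.inl a) (Sum.inr b) = if a = b then 1 else 0 := by
  simp [_root_.J, Matrix.one_apply]

lemma J_rl (N : ℕ) (a b : Fin N) : J N (Sum.inr a) (Sum.inl b) = -if a = b then 1 else 0 := by
  simp [_root_.J, Matrix.one_apply]

lemma J_rr (N : ℕ) (a b : Fin N) : J N (Sum.inr a) (Sum.inr b) = 0 := rfl

/-- Matrix form of the symplectic eigenbasis, in terms of dot products. -/
lemma symp_basis_matrix (N : ℕ) (P : Matrix (Fin N ⊕ Fin N) (Fin N ⊕ Fin N) ℝ)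
    (hP : P.PosDef) (hPJ : P * J N * P = J N) :
    ∃ (e : Fin N → (Fin N ⊕ Fin N → ℝ)) (μ : Fin N → ℝ),
      (∀ i j, e i ⬝ᵥ e j = if i = j then 1 else 0) ∧
      (∀ i j, e i ⬝ᵥ (J N *ᵥ e j) = 0) ∧ (∀ i, 0 < μ i) ∧ ∀ i, P *ᵥ e i = μ i • e i := by
  have hin : ∀ x y : EuclideanSpace ℝ (Fin N ⊕ Fin N), ⟪x, y⟫_ℝ = x.ofLp ⬝ᵥ y.ofLp := by
    intro x y
    rw [EuclideanSpace.inner_eq_star_dotProduct, dotProduct_comm]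
    simp
  obtain ⟨e, μ, h1, h2, h3, h4⟩ := symp_basis (E := EuclideanSpace ℝ (Fin N ⊕ Fin N))
    (Matrix.toEuclideanLin P) (Matrix.toEuclideanLin (J N))
    (Matrix.isSymmetric_toEuclideanLin_iff.mpr hP.1)
    (by
      intro x hx
      have := hP.dotProduct_mulVec_pos (x := x.ofLp) (by simpa using hx)
      rw [hin, dotProduct_comm]
      simpa using this)
    (by
      intro x y
      simp only [hin, Matrix.ofLp_toLpLin, Matrix.toLin'_apply]
      rw [dotProduct_mulVec, ← mulVec_transpose, J_tr, neg_mulVec, neg_dotProduct, neg_neg])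
    (by
      intro x
      ext1
      simp [Matrix.mulVec_mulVec, ← Matrix.mul_assoc, hPJ])
    N (by simp; omega)
  refine ⟨fun i => (e i).ofLp, μ, ?_, ?_, h3, ?_⟩
  · intro i j
    rw [← h1, hin]
  · intro i j
    rw [← h2 i j, hin]
    simp
  · intro i
    have := congrArg WithLp.ofLp (h4 i)
    simpa using this

/-- Orthogonal symplectic diagonalization of a symplectic positive definite matrix. -/
lemma symp_diag (N : ℕ) (P : Matrix (Fin N ⊕ Fin N) (Fin N ⊕ Fin N) ℝ)
    (hP : P.PosDef) (hPJ : P * J N * P = J N) :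
    ∃ (W : Matrix (Fin N ⊕ Fin N) (Fin N ⊕ Fin N) ℝ) (μ : Fin N → ℝ),
      Wᵀ * W = 1 ∧ Wᵀ * J N * W = J N ∧ (∀ i, 0 < μ i) ∧
      P * W = W * diagonal (Sum.elim μ (fun i => (μ i)⁻¹)) := by
  obtain ⟨e, μ, h1, h2, h3, h4⟩ := symp_basis_matrix N P hP hPJ
  let W : Matrix (Fin N ⊕ Fin N) (Fin N ⊕ Fin N) ℝ :=
    (Matrix.of (Sum.elim e (fun i => -(J N *ᵥ e i))))ᵀ
  have hl : ∀ A : Matrix (Fin N ⊕ Fin N) (Fin N ⊕ Fin N) ℝ, ∀ a b,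
      (A * W) a b = (A *ᵥ (Sum.elim e (fun i => -(J N *ᵥ e i)) b)) a := by
    intro A a b
    rfl
  have hq : ∀ A : Matrix (Fin N ⊕ Fin N) (Fin N ⊕ Fin N) ℝ, ∀ a b,
      (Wᵀ * A * W) a b = (Sum.elim e (fun i => -(J N *ᵥ e i)) a) ⬝ᵥ
        (A *ᵥ (Sum.elim e (fun i => -(J N *ᵥ e i)) b)) := by
    intro A a b
    rw [Matrix.mul_assoc]
    rfl
  have hJe : ∀ x y : Fin N ⊕ Fin N → ℝ, (J N *ᵥ x) ⬝ᵥ y = - (x ⬝ᵥ (J N *ᵥ y)) := by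
    intro x y
    rw [dotProduct_mulVec, ← mulVec_transpose, J_tr, neg_mulVec, neg_dotProduct, neg_neg]
  have hJJ : ∀ x : Fin N ⊕ Fin N → ℝ, J N *ᵥ (J N *ᵥ x) = -x := by
    intro x
    rw [mulVec_mulVec, J_mul_J, neg_mulVec, one_mulVec]
  refine ⟨W, μ, ?_, ?_, h3, ?_⟩
  · rw [← Matrix.mul_one Wᵀ]
    ext (a | a) (b | b) <;> rw [hq] <;>
      simp [hJe, hJJ, h1, h2, mulVec_neg, Matrix.one_apply]
  · ext (a | a) (b | b) <;> rw [hq] <;>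
      simp [hJe, hJJ, h1, h2, mulVec_neg, J_ll, J_lr, J_rl, J_rr]
  · have h5 : ∀ i, P *ᵥ (J N *ᵥ e i) = (μ i)⁻¹ • (J N *ᵥ e i) := by
      intro i
      have : P *ᵥ (J N *ᵥ (P *ᵥ e i)) = J N *ᵥ e i := by
        rw [mulVec_mulVec, mulVec_mulVec, hPJ]
      rw [h4, mulVec_smul, mulVec_smul] at this
      nth_rewrite 2 [← this]
      rw [smul_smul, inv_mul_cancel₀ (h3 i).ne', one_smul]
    ext a (b | b) <;> rw [hl, mul_diagonal]
    · simp [h4, W, mul_comm]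
    · simp [h5, W, mulVec_neg, mul_comm]

/-- Every symplectic matrix admits a symplectic singular value decomposition
`S = U * D * V` with `U`, `V` orthogonal symplectic and `D` diagonal, the first `N`
diagonal entries being `d i > 0` and the last `N` being `(d i)⁻¹`. -/
theorem stmt_1 (N : ℕ) (S : Matrix (Fin N ⊕ Fin N) (Fin N ⊕ Fin N) ℝ)
    (hS : Sᵀ * J N * S = J N) :
    ∃ (U V : Matrix (Fin N ⊕ Fin N) (Fin N ⊕ Fin N) ℝ) (d : Fin N → ℝ),
      Uᵀ * J N * U = J N ∧ Uᵀ * U = 1 ∧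
      Vᵀ * J N * V = J N ∧ Vᵀ * V = 1 ∧
      (∀ i, 0 < d i) ∧
      S = U * Matrix.diagonal (Sum.elim d (fun i => (d i)⁻¹)) * V := by
  -- left inverse of S
  have hL : (-(J N * Sᵀ * J N)) * S = 1 := by
    rw [Matrix.neg_mul, Matrix.mul_assoc, Matrix.mul_assoc, ← Matrix.mul_assoc Sᵀ, hS, J_mul_J,
      neg_neg]
  have hR : S * (-(J N * Sᵀ * J N)) = 1 := mul_eq_one_comm.mp hL
  have hSt : S * J N * Sᵀ = J N := by
    have : S * J N * Sᵀ * (J N * J N) = S * (J N * Sᵀ * J N) * J N := by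
      simp only [Matrix.mul_assoc]
    rw [Matrix.mul_neg] at hR
    rw [J_mul_J, neg_eq_iff_eq_neg.mp hR] at this
    simpa using this
  have hinj : Function.Injective S.mulVec := by
    intro x y hxy
    have := congrArg (fun z => (-(J N * Sᵀ * J N)) *ᵥ z) hxy
    simpa only [mulVec_mulVec, hL, one_mulVec] using this
  have hP : (Sᵀ * S).PosDef := by
    have := Matrix.PosDef.conjTranspose_mul_self S hinj
    rwa [conjTranspose_eq_transpose_of_trivial] at this
  have hPJ : (Sᵀ * S) * J N * (Sᵀ * S) = J N := by
    have : (Sᵀ * S) * J N * (Sᵀ * S) = Sᵀ * (S * J N * Sᵀ) * S := by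
      simp only [Matrix.mul_assoc]
    rw [this, hSt, hS]
  obtain ⟨W, μ, hW1, hW2, hμ, hPW⟩ := symp_diag N _ hP hPJ
  have hW3 : W * Wᵀ = 1 := mul_eq_one_comm.mp hW1
  let d : Fin N → ℝ := fun i => Real.sqrt (μ i)
  have hd : ∀ i, 0 < d i := fun i => Real.sqrt_pos.mpr (hμ i)
  have hdμ : ∀ i, μ i = d i * d i := fun i => (Real.mul_self_sqrt (hμ i).le).symm
  let D := Matrix.diagonal (Sum.elim d (fun i => (d i)⁻¹))
  let Dinv := Matrix.diagonal (Sum.elim (fun i => (d i)⁻¹) d)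
  have hDinvD : Dinv * D = 1 := by
    rw [diagonal_mul_diagonal, ← diagonal_one]
    congr 1
    ext (i | i) <;> simp [(hd i).ne']
  have hDμ : diagonal (Sum.elim μ (fun i => (μ i)⁻¹)) = D * D := by
    rw [diagonal_mul_diagonal]
    congr 1
    ext (i | i) <;> simp [hdμ]
  have hDinvt : Dinvᵀ = Dinv := diagonal_transpose _
  have hDinvJ : Dinv * J N * Dinv = J N := by
    ext (a | a) (b | b) <;>
      simp only [Dinv, Matrix.mul_diagonal, Matrix.diagonal_mul, J_ll, J_lr, J_rl, J_rr,
        Sum.elim_inl, Sum.elim_inr]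
    · simp
    · by_cases h : a = b
      · subst h
        simp [(hd _).ne']
      · simp [h]
    · by_cases h : a = b
      · subst h
        simp [(hd _).ne']
      · simp [h]
    · simp
  have hDDinv : D * Dinv = 1 := mul_eq_one_comm.mp hDinvD
  refine ⟨S * W * Dinv, Wᵀ, d, ?_, ?_, ?_, ?_, hd, ?_⟩
  · have : (S * W * Dinv)ᵀ * J N * (S * W * Dinv) = Dinv * (Wᵀ * (Sᵀ * J N * S) * W) * Dinv := by
      simp only [transpose_mul, hDinvt, Matrix.mul_assoc]
    rw [this, hS, hW2, hDinvJ]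
  · have : (S * W * Dinv)ᵀ * (S * W * Dinv) = Dinv * (Wᵀ * (Sᵀ * S * W)) * Dinv := by
      simp only [transpose_mul, hDinvt, Matrix.mul_assoc]
    rw [this, hPW, hDμ, ← Matrix.mul_assoc Wᵀ, hW1, Matrix.one_mul, ← Matrix.mul_assoc Dinv, hDinvD,
      Matrix.one_mul, hDDinv]
  · have : W * (Wᵀ * J N * W) * Wᵀ = (W * Wᵀ) * J N * (W * Wᵀ) := by
      simp only [Matrix.mul_assoc]
    rw [hW2, hW3, Matrix.one_mul, Matrix.mul_one] at this
    rw [transpose_transpose, this]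
  · rw [transpose_transpose, hW3]
  · change S = S * W * Dinv * D * Wᵀ
    rw [Matrix.mul_assoc (S * W), hDinvD, Matrix.mul_one, Matrix.mul_assoc, hW3, Matrix.mul_one]
end

section
/- Let E be an n×n real diagonal matrix with strictly positive diagonal entries, and let U, V be real orthogonal n×n matrices such that U·E·V = E. Then V = Uᵀ and U commutes with E (equivalently, U stabilizes E: Uᵀ·E·U = E). -/
open Matrix

/-- Uniqueness of SVDs of a positive diagonal matrix: if `E` is diagonal with strictly
positive entries and `U`, `V` are orthogonal with `U E V = E`, then `V = Uᵀ` and `U`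
commutes with `E` (equivalently, `Uᵀ E U = E`). -/
theorem stmt_14 (n : ℕ) (e : Fin n → ℝ) (he : ∀ i, 0 < e i)
    (U V : Matrix (Fin n) (Fin n) ℝ) (hU : Uᵀ * U = 1) (hV : Vᵀ * V = 1)
    (h : U * Matrix.diagonal e * V = Matrix.diagonal e) :
    V = Uᵀ ∧ U * Matrix.diagonal e = Matrix.diagonal e * U ∧
      Uᵀ * Matrix.diagonal e * U = Matrix.diagonal e := by
  have hU' : U * Uᵀ = 1 := mul_eq_one_comm.mp hU
  have hV' : V * Vᵀ = 1 := mul_eq_one_comm.mp hV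
  have h1 : U * Matrix.diagonal e = Matrix.diagonal e * Vᵀ := by
    calc U * Matrix.diagonal e = U * Matrix.diagonal e * (V * Vᵀ) := by rw [hV', mul_one]
      _ = (U * Matrix.diagonal e * V) * Vᵀ := by simp only [mul_assoc]
      _ = _ := by rw [h]
  have h2 : Matrix.diagonal e * V = Uᵀ * Matrix.diagonal e := by
    calc Matrix.diagonal e * V = (Uᵀ * U) * (Matrix.diagonal e * V) := by rw [hU, one_mul]
      _ = Uᵀ * (U * Matrix.diagonal e * V) := by simp only [mul_assoc]
      _ = _ := by rw [h]
  have key : ∀ i j, U i j * e j = e i * U i j := by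
    intro i j
    have a : U i j * e j = e i * V j i := by
      have := congrFun (congrFun h1 i) j
      simpa [Matrix.mul_diagonal, Matrix.diagonal_mul] using this
    have b : e j * V j i = U i j * e i := by
      have := congrFun (congrFun h2 j) i
      simpa [Matrix.mul_diagonal, Matrix.diagonal_mul] using this
    have hp : e i + e j ≠ 0 := (add_pos (he i) (he j)).ne'
    apply mul_left_cancel₀ hp
    linear_combination e j * a + e i * b
  have comm : U * Matrix.diagonal e = Matrix.diagonal e * U := by
    ext i j
    simpa [Matrix.mul_diagonal, Matrix.diagonal_mul] using key i j
  refine ⟨?_, comm, ?_⟩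
  · have h3 : Matrix.diagonal e * U = Matrix.diagonal e * Vᵀ := comm.symm.trans h1
    have h4 : U = Vᵀ := by
      ext i j
      have := congrFun (congrFun h3 i) j
      simp only [Matrix.diagonal_mul] at this
      exact mul_left_cancel₀ (he i).ne' this
    rw [h4, Matrix.transpose_transpose]
  · rw [mul_assoc, ← comm, ← mul_assoc, hU, one_mul]
end

section
/- Let W and S both lie in the orthogonal symplectic group OSp(2N,ℝ) = Sp(2N,ℝ) ∩ O(2N). Then Tr(WᵀS·J·Y) = 0 for every real 2N×2N matrix Y satisfying Yᵀ = Y and JY = YJ (i.e., for every tangent direction JY in the Lie algebra of OSp(2N,ℝ)) if and only if WᵀS is symmetric, i.e., WᵀS = SᵀW. -/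
open Matrix

/-- For `W`, `S` in the orthogonal symplectic group, `Tr(WᵀS·J·Y) = 0` for every `Y`
with `Yᵀ = Y` and `JY = YJ` (i.e., along every tangent direction of `OSp(2N,ℝ)`) iff
`WᵀS` is symmetric, i.e., `WᵀS = SᵀW`. -/
theorem stmt_16 (N : ℕ) (W S : Matrix (Fin N ⊕ Fin N) (Fin N ⊕ Fin N) ℝ)
    (hWsymp : Wᵀ * J N * W = J N) (hWorth : Wᵀ * W = 1)
    (hSsymp : Sᵀ * J N * S = J N) (hSorth : Sᵀ * S = 1) :
    (∀ Y : Matrix (Fin N ⊕ Fin N) (Fin N ⊕ Fin N) ℝ, Yᵀ = Y → J N * Y = Y * J N →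
        (Wᵀ * S * J N * Y).trace = 0) ↔
      Wᵀ * S = Sᵀ * W := by
  have hJT : (J N)ᵀ = -J N := by
    simp [_root_.J, Matrix.fromBlocks_transpose, Matrix.fromBlocks_neg]
  have hJJ : J N * J N = -1 := by
    rw [_root_.J, Matrix.fromBlocks_multiply, ← Matrix.fromBlocks_one, Matrix.fromBlocks_neg]
    simp
  have hW' : W * Wᵀ = 1 := mul_eq_one_comm.mp hWorth
  have hS' : S * Sᵀ = 1 := mul_eq_one_comm.mp hSorth
  have hWJ : Wᵀ * J N = J N * Wᵀ := by
    calc Wᵀ * J N = Wᵀ * J N * (W * Wᵀ) := by rw [hW', mul_one]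
      _ = (Wᵀ * J N * W) * Wᵀ := by simp only [mul_assoc]
      _ = _ := by rw [hWsymp]
  have hSJ : S * J N = J N * S := by
    calc S * J N = S * (Sᵀ * J N * S) := by rw [hSsymp]
      _ = (S * Sᵀ) * J N * S := by simp only [mul_assoc]
      _ = _ := by rw [hS', one_mul]
  have hT : Sᵀ * W = (Wᵀ * S)ᵀ := by simp
  have hAJ : (Wᵀ * S) * J N = J N * (Wᵀ * S) := by
    rw [mul_assoc, hSJ, ← mul_assoc, hWJ, mul_assoc]
  rw [hT]
  generalize Wᵀ * S = A at hAJ ⊢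
  have hAJ' : Aᵀ * J N = J N * Aᵀ := by
    have h := congrArg Matrix.transpose hAJ
    simp only [Matrix.transpose_mul, hJT, neg_mul, mul_neg, neg_inj] at h
    exact h.symm
  constructor
  · intro h
    have hKJ : (A - Aᵀ) * J N = J N * (A - Aᵀ) := by
      rw [sub_mul, mul_sub, hAJ, hAJ']
    have hKT : (A - Aᵀ)ᵀ = -(A - Aᵀ) := by simp
    have h1 := h (J N * (A - Aᵀ))
      (by rw [Matrix.transpose_mul, hKT, hJT, neg_mul_neg, hKJ])
      (by rw [mul_assoc, hKJ])
    have h2 : (A * (A - Aᵀ)).trace = 0 := by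
      have e : A * J N * (J N * (A - Aᵀ)) = -(A * (A - Aᵀ)) := by
        rw [mul_assoc, ← mul_assoc (J N), hJJ, neg_one_mul, mul_neg]
      rw [e, Matrix.trace_neg] at h1
      linarith
    have h3 : (Aᵀ * (A - Aᵀ)).trace = 0 := by
      rw [← Matrix.trace_transpose, Matrix.transpose_mul, hKT, Matrix.transpose_transpose,
        neg_mul, Matrix.trace_neg, Matrix.trace_mul_comm, h2, neg_zero]
    have h4 : ((A - Aᵀ)ᴴ * (A - Aᵀ)).trace = 0 := by
      rw [Matrix.conjTranspose_eq_transpose_of_trivial, hKT, neg_mul, Matrix.trace_neg,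
        sub_mul, Matrix.trace_sub, h2, h3]
      simp
    exact sub_eq_zero.mp (Matrix.trace_conjTranspose_mul_self_eq_zero_iff.mp h4)
  · intro h Y hY hJY
    have e : (A * J N * Y).trace = -(A * J N * Y).trace := by
      conv_lhs => rw [← Matrix.trace_transpose]
      rw [Matrix.transpose_mul, Matrix.transpose_mul, hY, hJT, ← h, neg_mul, mul_neg,
        Matrix.trace_neg, ← mul_assoc, ← hJY, Matrix.trace_mul_comm, mul_assoc]
    linarith
end

section
/- Let W, S ∈ OSp(2N,ℝ) = Sp(2N,ℝ) ∩ O(2N) satisfy WᵀS = SᵀW. Then there exist an integer m with 0 ≤ m ≤ N and a matrix R ∈ OSp(2N,ℝ) such that S = W·Rᵀ·D_m·R, where D_m is the 2N×2N diagonal matrix whose diagonal is (−1,…,−1, 1,…,1, −1,…,−1, 1,…,1) with −1 occurring in the first m positions of each of the two N-blocks and +1 in the remaining positions. -/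
open Matrix

/-- `D_m` is the 2N×2N diagonal matrix with `−1` in the first `m` positions of each of
the two N-blocks of the diagonal and `+1` in the remaining positions. -/
noncomputable def Dm (N m : ℕ) : Matrix (Fin N ⊕ Fin N) (Fin N ⊕ Fin N) ℝ :=
  Matrix.diagonal (Sum.elim
    (fun j : Fin N => if (j : ℕ) < m then (-1 : ℝ) else 1)
    (fun j : Fin N => if (j : ℕ) < m then (-1 : ℝ) else 1))

/-- Realification of a complex matrix. -/
noncomputable def phi {N : ℕ} (Z : Matrix (Fin N) (Fin N) ℂ) :
    Matrix (Fin N ⊕ Fin N) (Fin N ⊕ Fin N) ℝ :=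
  Matrix.fromBlocks (Z.map Complex.re) (Z.map Complex.im) (-(Z.map Complex.im)) (Z.map Complex.re)

lemma phi_mul {N : ℕ} (Y Z : Matrix (Fin N) (Fin N) ℂ) : phi (Y * Z) = phi Y * phi Z := by
  unfold phi
  rw [Matrix.fromBlocks_multiply]
  congr 1 <;> ext i j <;>
    simp [Matrix.mul_apply, Finset.sum_add_distrib, Finset.sum_sub_distrib] <;> ring

lemma phi_ct {N : ℕ} (Z : Matrix (Fin N) (Fin N) ℂ) : phi Zᴴ = (phi Z)ᵀ := by
  unfold phi
  rw [Matrix.fromBlocks_transpose]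
  congr 1 <;> ext i j <;> simp

lemma phi_one {N : ℕ} : phi (1 : Matrix (Fin N) (Fin N) ℂ) = 1 := by
  unfold phi
  rw [← Matrix.fromBlocks_one]
  congr 1 <;> ext i j <;> by_cases h : i = j <;> simp [Matrix.one_apply, h]

lemma phi_inj {N : ℕ} {Y Z : Matrix (Fin N) (Fin N) ℂ} (h : phi Y = phi Z) : Y = Z := by
  unfold phi at h
  obtain ⟨h1, h2, -, -⟩ := Matrix.fromBlocks_inj.1 h
  ext i j
  exact Complex.ext (congrFun (congrFun h1 i) j) (congrFun (congrFun h2 i) j)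

lemma phi_J {N : ℕ} (Z : Matrix (Fin N) (Fin N) ℂ) : J N * phi Z = phi Z * J N := by
  unfold phi _root_.J
  simp [Matrix.fromBlocks_multiply]

lemma exists_phi {N : ℕ} (X : Matrix (Fin N ⊕ Fin N) (Fin N ⊕ Fin N) ℝ)
    (h : J N * X = X * J N) : ∃ Z, X = phi Z := by
  refine ⟨Matrix.of fun i j => ⟨X.toBlocks₁₁ i j, X.toBlocks₁₂ i j⟩, ?_⟩
  rw [← Matrix.fromBlocks_toBlocks X] at h
  unfold _root_.J at h
  simp only [Matrix.fromBlocks_multiply] at h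
  obtain ⟨h1, h2, -, -⟩ := Matrix.fromBlocks_inj.1 h
  simp at h1 h2
  conv_lhs => rw [← Matrix.fromBlocks_toBlocks X, h1, h2]
  unfold phi
  congr 1

lemma phi_Dm {N m : ℕ} : phi (Matrix.diagonal
    (fun j : Fin N => if (j : ℕ) < m then (-1 : ℂ) else 1)) = Dm N m := by
  unfold phi Dm
  rw [← Matrix.fromBlocks_diagonal]
  congr 1 <;> ext i j <;> by_cases h : i = j <;> by_cases h' : (j : ℕ) < m <;>
    simp [Matrix.diagonal_apply, h, h']

lemma comm_J {N : ℕ} {W : Matrix (Fin N ⊕ Fin N) (Fin N ⊕ Fin N) ℝ}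
    (h : Wᵀ * J N * W = J N) (h1 : Wᵀ * W = 1) : J N * W = W * J N := by
  have h2 : W * Wᵀ = 1 := mul_eq_one_comm.1 h1
  calc J N * W = (W * Wᵀ) * (J N * W) := by rw [h2, one_mul]
    _ = W * (Wᵀ * J N * W) := by simp only [mul_assoc]
    _ = _ := by rw [h]

lemma exists_cut {N : ℕ} (f : Fin N → ℝ) (hf : Monotone f) (h : ∀ i, f i = 1 ∨ f i = -1) :
    ∃ m ≤ N, ∀ j : Fin N, f j = if (j : ℕ) < m then -1 else 1 := by
  have hP : ∃ m, ∀ j : Fin N, m ≤ (j : ℕ) → f j = 1 :=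
    ⟨N, fun j hj => absurd j.2 (by omega)⟩
  classical
  refine ⟨Nat.find hP, Nat.find_min' hP (fun j hj => absurd j.2 (by omega)), fun j => ?_⟩
  split_ifs with hj
  · have := Nat.find_min hP hj
    push Not at this
    obtain ⟨k, hk, hk1⟩ := this
    have h1 := (h k).resolve_left hk1
    have h3 := Nat.find_spec hP
    have h2 := hf (show j ≤ k from hk)
    rcases h j with h4 | h4
    · linarith
    · exact h4
  · exact Nat.find_spec hP j (by omega)

lemma exists_diag {N : ℕ} (H : Matrix (Fin N) (Fin N) ℂ) (hH : H.IsHermitian) (h2 : H * H = 1) :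
    ∃ (m : ℕ) (V : Matrix (Fin N) (Fin N) ℂ), m ≤ N ∧ Vᴴ * V = 1 ∧
      H = Vᴴ * Matrix.diagonal (fun j : Fin N => if (j : ℕ) < m then (-1 : ℂ) else 1) * V := by
  set U : Matrix (Fin N) (Fin N) ℂ := (hH.eigenvectorUnitary : Matrix (Fin N) (Fin N) ℂ) with hU
  have hUU : Uᴴ * U = 1 := Unitary.coe_star_mul_self hH.eigenvectorUnitary
  have hUU' : U * Uᴴ = 1 := mul_eq_one_comm.1 hUU
  set D : Matrix (Fin N) (Fin N) ℂ := Matrix.diagonal (fun j => (hH.eigenvalues j : ℂ)) with hD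
  have hs : H = U * D * Uᴴ := by
    have := hH.spectral_theorem
    rw [Unitary.conjStarAlgAut_apply] at this
    exact this
  have hDD : D * D = 1 := by
    have : D = Uᴴ * H * U := by
      rw [hs]
      simp only [mul_assoc, hUU, mul_one]
      rw [← mul_assoc, hUU, one_mul]
    rw [this]
    calc Uᴴ * H * U * (Uᴴ * H * U) = Uᴴ * H * (U * Uᴴ) * H * U := by simp only [mul_assoc]
      _ = Uᴴ * (H * H) * U := by rw [hUU', mul_one]; simp only [mul_assoc]
      _ = 1 := by rw [h2, mul_one, hUU]
  have hev : ∀ i, hH.eigenvalues i = 1 ∨ hH.eigenvalues i = -1 := by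
    intro i
    have := congrFun (congrFun hDD i) i
    rw [hD, Matrix.diagonal_mul_diagonal, Matrix.diagonal_apply_eq, Matrix.one_apply_eq] at this
    exact mul_self_eq_one_iff.1 (by exact_mod_cast this)
  set σ := Tuple.sort hH.eigenvalues
  obtain ⟨m, hm, hc⟩ := exists_cut (hH.eigenvalues ∘ σ) (Tuple.monotone_sort _) (fun i => hev _)
  have hd : Matrix.diagonal (fun j : Fin N => if (j : ℕ) < m then (-1 : ℂ) else 1)
      = D.submatrix σ σ := by
    rw [hD, Matrix.submatrix_diagonal_equiv]
    congr 1
    ext j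
    have := hc j
    simp only [Function.comp] at this ⊢
    rw [this]
    split_ifs <;> simp
  refine ⟨m, Uᴴ.submatrix σ id, hm, ?_, ?_⟩
  · rw [Matrix.conjTranspose_submatrix, Matrix.conjTranspose_conjTranspose,
      Matrix.submatrix_mul_equiv, hUU']
    simp
  · rw [hd, Matrix.conjTranspose_submatrix, Matrix.conjTranspose_conjTranspose,
      Matrix.submatrix_mul_equiv, Matrix.submatrix_mul_equiv, ← hs]
    simp

/-- Critical points of the cost on the orthogonal symplectic group: if
`W, S ∈ OSp(2N,ℝ)` satisfy `WᵀS = SᵀW`, then `S = W·Rᵀ·D_m·R` for some `0 ≤ m ≤ N`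
and some `R ∈ OSp(2N,ℝ)`. -/
theorem stmt_17 (N : ℕ) (W S : Matrix (Fin N ⊕ Fin N) (Fin N ⊕ Fin N) ℝ)
    (hWsymp : Wᵀ * J N * W = J N) (hWorth : Wᵀ * W = 1)
    (hSsymp : Sᵀ * J N * S = J N) (hSorth : Sᵀ * S = 1)
    (hcrit : Wᵀ * S = Sᵀ * W) :
    ∃ (m : ℕ) (R : Matrix (Fin N ⊕ Fin N) (Fin N ⊕ Fin N) ℝ),
      m ≤ N ∧ Rᵀ * J N * R = J N ∧ Rᵀ * R = 1 ∧
      S = W * Rᵀ * Dm N m * R := by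
  have hWW : W * Wᵀ = 1 := mul_eq_one_comm.1 hWorth
  have hSS : S * Sᵀ = 1 := mul_eq_one_comm.1 hSorth
  have hcW := comm_J hWsymp hWorth
  have hcS := comm_J hSsymp hSorth
  have hX : J N * (Wᵀ * S) = (Wᵀ * S) * J N := by
    calc J N * (Wᵀ * S) = (Wᵀ * W) * J N * (Wᵀ * S) := by rw [hWorth, one_mul]
      _ = Wᵀ * (W * J N) * Wᵀ * S := by simp only [mul_assoc]
      _ = Wᵀ * J N * (W * Wᵀ) * S := by rw [← hcW]; simp only [mul_assoc]
      _ = Wᵀ * (J N * S) := by rw [hWW, mul_one, mul_assoc]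
      _ = _ := by rw [hcS, mul_assoc]
  obtain ⟨H, hH⟩ := exists_phi _ hX
  have hHerm : H.IsHermitian := by
    apply phi_inj
    rw [phi_ct, ← hH, Matrix.transpose_mul, Matrix.transpose_transpose, hcrit]
  have hH2 : H * H = 1 := by
    apply phi_inj
    rw [phi_mul, ← hH, phi_one]
    nth_rewrite 2 [hcrit]
    rw [mul_assoc, ← mul_assoc S, hSS, one_mul, hWorth]
  obtain ⟨m, V, hm, hV, hd⟩ := exists_diag H hHerm hH2
  have hR : (phi V)ᵀ * phi V = 1 := by rw [← phi_ct, ← phi_mul, hV, phi_one]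
  refine ⟨m, phi V, hm, ?_, hR, ?_⟩
  · rw [mul_assoc, phi_J, ← mul_assoc, hR, one_mul]
  · have : S = W * (Wᵀ * S) := by rw [← mul_assoc, hWW, one_mul]
    rw [this, hH, hd, phi_mul, phi_mul, phi_ct, phi_Dm]
    simp only [mul_assoc]
end

section
/- Let W, S ∈ OSp(2N,ℝ) = Sp(2N,ℝ) ∩ O(2N) satisfy WᵀS = SᵀW. Then there exists an integer m with 0 ≤ m ≤ N such that Tr[(S − W)ᵀ(S − W)] = 8m. In particular, the critical values of the cost function 𝒥 restricted to OSp(2N,ℝ) all lie in the set {0, 8, 16, …, 8N}, the minimum value 0 being attained at S = W. -/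
open Matrix

theorem idem_trace_aux {N : ℕ} (Q : Matrix (Fin N) (Fin N) ℂ) (h : Q * Q = Q) :
    ∃ m : ℕ, m ≤ N ∧ Q.trace = (m : ℂ) := by
  have hl : IsIdempotentElem (Matrix.toLin' Q) := by
    unfold IsIdempotentElem
    rw [Module.End.mul_eq_comp, ← Matrix.toLin'_mul, h]
  have hp := (LinearMap.IsIdempotentElem.isProj_range _ hl)
  refine ⟨_, ?_, (Matrix.trace_toLin'_eq Q).symm.trans hp.trace⟩
  simpa using Submodule.finrank_le (LinearMap.range (Matrix.toLin' Q))

theorem comm_aux {N : ℕ} (A : Matrix (Fin N ⊕ Fin N) (Fin N ⊕ Fin N) ℝ)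
    (hJ : A * J N = J N * A) (h1 : A * A = 1) :
    ∃ m : ℕ, m ≤ N ∧ A.trace = 2 * (N : ℝ) - 4 * m := by
  obtain ⟨X, Y, Z, T, rfl⟩ : ∃ X Y Z T, A = fromBlocks X Y Z T :=
    ⟨_, _, _, _, (fromBlocks_toBlocks A).symm⟩
  simp only [_root_.J, fromBlocks_multiply, mul_zero, zero_mul, mul_one, one_mul, mul_neg, neg_mul,
    zero_add, add_zero, fromBlocks_inj] at hJ
  obtain ⟨hZ, hT, -, -⟩ := hJ
  subst hZ hT
  rw [fromBlocks_multiply, ← fromBlocks_one, fromBlocks_inj] at h1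
  obtain ⟨ha, hb, -, -⟩ := h1
  let f : Matrix (Fin N) (Fin N) ℝ →+* Matrix (Fin N) (Fin N) ℂ := Complex.ofRealHom.mapMatrix
  have ha' := congrArg f ha
  have hb' := congrArg f hb
  simp only [map_add, map_mul, map_neg, map_one, map_zero, mul_neg] at ha' hb'
  set U := f X + Complex.I • f Y with hU
  have hUU : U * U = 1 := by
    have : U * U = (f X * f X + -(f Y * f Y)) + Complex.I • (f X * f Y + f Y * f X) := by
      rw [hU, add_mul, mul_add, mul_add]
      simp only [smul_mul_assoc, mul_smul_comm, smul_smul, Complex.I_mul_I, smul_add, neg_smul,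
        one_smul]
      abel
    rw [this, ha', hb', smul_zero, add_zero]
  obtain ⟨m, hm, ht⟩ := idem_trace_aux ((1/2 : ℂ) • (1 - U)) (by
    rw [smul_mul_smul_comm, sub_mul, mul_sub, mul_sub, hUU]
    simp only [mul_one, one_mul]
    module)
  refine ⟨m, hm, ?_⟩
  have e : ∀ M : Matrix (Fin N) (Fin N) ℝ, (f M).trace = ((M.trace : ℝ) : ℂ) := fun M => by
    simp [f, Matrix.trace]
  rw [trace_smul, trace_sub, hU, trace_add, trace_smul, e, e, trace_one] at ht
  have := congrArg Complex.re ht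
  simp at this
  have h2 : (fromBlocks X Y (-Y) X).trace = X.trace + X.trace := by
    simp [Matrix.trace, Fintype.sum_sum_type]
  rw [h2]
  linarith

/-- Critical values of the cost on the orthogonal symplectic group: if
`W, S ∈ OSp(2N,ℝ)` satisfy `WᵀS = SᵀW`, then `Tr[(S − W)ᵀ(S − W)] = 8m` for some
`0 ≤ m ≤ N`; in particular the critical values lie in `{0, 8, 16, …, 8N}`. -/
theorem stmt_18 (N : ℕ) (W S : Matrix (Fin N ⊕ Fin N) (Fin N ⊕ Fin N) ℝ)
    (hWsymp : Wᵀ * J N * W = J N) (hWorth : Wᵀ * W = 1)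
    (hSsymp : Sᵀ * J N * S = J N) (hSorth : Sᵀ * S = 1)
    (hcrit : Wᵀ * S = Sᵀ * W) :
    ∃ m : ℕ, m ≤ N ∧ ((S - W)ᵀ * (S - W)).trace = 8 * (m : ℝ) := by
  have hW' : W * Wᵀ = 1 := mul_eq_one_comm.1 hWorth
  have hS' : S * Sᵀ = 1 := mul_eq_one_comm.1 hSorth
  have h1 : (Wᵀ * S) * (Wᵀ * S) = 1 := by
    nth_rewrite 2 [hcrit]
    rw [mul_assoc, ← mul_assoc S, hS', one_mul, hWorth]
  have hJ : (Wᵀ * S) * J N = J N * (Wᵀ * S) := by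
    calc (Wᵀ * S) * J N = Wᵀ * S * (Sᵀ * J N * S) := by rw [hSsymp]
      _ = Wᵀ * (S * Sᵀ) * J N * S := by simp only [mul_assoc]
      _ = Wᵀ * J N * (W * Wᵀ) * S := by rw [hS', hW', mul_one, mul_one]
      _ = (Wᵀ * J N * W) * (Wᵀ * S) := by simp only [mul_assoc]
      _ = _ := by rw [hWsymp]
  obtain ⟨m, hm, ht⟩ := comm_aux _ hJ h1
  refine ⟨m, hm, ?_⟩
  rw [transpose_sub, sub_mul, mul_sub, mul_sub, hSorth, hWorth, ← hcrit]
  simp only [trace_sub, ht, trace_one, Fintype.card_sum, Fintype.card_fin, Nat.cast_add]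
  ring
end

section
/- Fix N and 0 ≤ m ≤ N. Let δ : {1,…,N} → ℝ be given by δ_j = −1 for j ≤ m and δ_j = 1 for j > m, let Δ be the N×N diagonal matrix with diagonal δ, and let D_m be the 2N×2N block-diagonal matrix diag(Δ, Δ). Let A be a symmetric real N×N matrix (Aᵀ = A) and C a skew-symmetric real N×N matrix (Cᵀ = −C), and set X equal to the 2N×2N block matrix [[A, C], [−C, A]]. Then the Hessian quadratic form satisfies the identity Tr[D_m·(J·X)²] = −2·Σ_{j=1}^{N} δ_j·(A_{jj})² − 2·Σ_{1 ≤ i < j ≤ N} (δ_i + δ_j)·((A_{ij})² + (C_{ij})²). -/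
open Matrix

/-- `δ_j = −1` for the first `m` indices and `1` for the remaining ones. -/
noncomputable def delta (N m : ℕ) : Fin N → ℝ :=
  fun j => if (j : ℕ) < m then -1 else 1

/-- The Hessian quadratic form on the orthogonal symplectic group at the critical point
with characteristic matrix `D_m = diag(Δ, Δ)`: for `X = [[A, C], [−C, A]]` with `A`
symmetric and `C` skew-symmetric,
`Tr[D_m·(J·X)²] = −2·Σ_j δ_j·A_{jj}² − 2·Σ_{i<j} (δ_i + δ_j)·(A_{ij}² + C_{ij}²)`. -/
theorem stmt_19 (N m : ℕ) (hm : m ≤ N)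
    (A C : Matrix (Fin N) (Fin N) ℝ) (hA : Aᵀ = A) (hC : Cᵀ = -C) :
    (Matrix.diagonal (Sum.elim (delta N m) (delta N m)) *
        (J N * Matrix.fromBlocks A C (-C) A) ^ 2).trace
      = -2 * (∑ j : Fin N, delta N m j * A j j ^ 2)
        - 2 * (∑ i : Fin N, ∑ j : Fin N,
            if i < j then (delta N m i + delta N m j) * (A i j ^ 2 + C i j ^ 2) else 0) := by
  have hA' : ∀ i j, A j i = A i j := fun i j => congrFun (congrFun hA i) j
  have hC' : ∀ i j, C j i = -C i j := fun i j => congrFun (congrFun hC i) j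
  have hCd : ∀ i, C i i = 0 := fun i => by linarith [hC' i i]
  have h1 : (Matrix.diagonal (Sum.elim (delta N m) (delta N m)) *
        (J N * Matrix.fromBlocks A C (-C) A) ^ 2).trace
      = -2 * ∑ i, ∑ j, delta N m i * (A i j ^ 2 + C i j ^ 2) := by
    have hsq : (J N * Matrix.fromBlocks A C (-C) A) ^ 2
        = Matrix.fromBlocks (C * C - A * A) (-(C * A) - A * C)
            (A * C + C * A) (C * C - A * A) := by
      rw [_root_.J, pow_two, Matrix.fromBlocks_multiply, Matrix.fromBlocks_multiply]
      congr 1 <;> simp <;> abel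
    rw [hsq, Matrix.trace]
    simp only [Matrix.diag_apply, Matrix.diagonal_mul, Fintype.sum_sum_type, Sum.elim_inl,
      Sum.elim_inr, Matrix.fromBlocks_apply₁₁, Matrix.fromBlocks_apply₂₂, Matrix.sub_apply]
    simp only [Matrix.mul_apply]
    rw [← Finset.sum_add_distrib, Finset.mul_sum]
    refine Finset.sum_congr rfl fun i _ => ?_
    rw [← Finset.sum_sub_distrib, ← two_mul, Finset.mul_sum, Finset.mul_sum, Finset.mul_sum]
    refine Finset.sum_congr rfl fun j _ => ?_
    rw [hA' i j, hC' i j]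
    ring
  have h2 : ∑ i, ∑ j, delta N m i * (A i j ^ 2 + C i j ^ 2)
      = ∑ i, ∑ j, (if i = j then delta N m i * A i j ^ 2 else 0)
        + ∑ i, ∑ j, (if i < j then delta N m i * (A i j ^ 2 + C i j ^ 2) else 0)
        + ∑ i, ∑ j, (if j < i then delta N m i * (A i j ^ 2 + C i j ^ 2) else 0) := by
    simp only [← Finset.sum_add_distrib]
    refine Finset.sum_congr rfl fun i _ => Finset.sum_congr rfl fun j _ => ?_
    rcases lt_trichotomy i j with h | h | h
    · simp [h, h.ne, h.not_gt]
    · subst h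
      simp [hCd]
    · simp [h, h.ne', h.not_gt]
  have h3 : ∑ i, ∑ j, (if i < j then (delta N m i + delta N m j) * (A i j ^ 2 + C i j ^ 2) else 0)
      = ∑ i, ∑ j, (if i < j then delta N m i * (A i j ^ 2 + C i j ^ 2) else 0)
        + ∑ i, ∑ j, (if j < i then delta N m i * (A i j ^ 2 + C i j ^ 2) else 0) := by
    rw [Finset.sum_comm (f := fun i j =>
      if j < i then delta N m i * (A i j ^ 2 + C i j ^ 2) else 0)]
    simp only [← Finset.sum_add_distrib]
    refine Finset.sum_congr rfl fun i _ => Finset.sum_congr rfl fun j _ => ?_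
    rw [hA' i j, hC' i j]
    split_ifs <;> ring
  rw [h1, h2, h3]
  simp only [Finset.sum_ite_eq, Finset.mem_univ, if_true]
  ring
end
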